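/- Let (X,d) be a metric space and ν a Borel probability measure on X satisfying the Gaussian enlargement property with parameter τ > 0. Let H > 0, let z ∈ X satisfy ∫_X d(z,y)² dν(y) ≤ H·τ, and set Y(y) = max(d(z,y) - √(2Hτ), 0). Then for every λ ≥ 0, ∫_X e^{λY} dν ≤ 1/2 + e^{τλ²}·Φ(λ√(2τ)), and for every β with 0 ≤ β < 1/4, ∫_X exp(β·Y²/τ) dν ≤ 1/2 + (1/2)·(1-4β)^{-1/2}. -/

import Mathlib

open Real MeasureTheory

/-- The standard Gaussian density. -/
noncomputable def gaussPdf (z : ℝ) : ℝ := (Real.sqrt (2 * Real.pi))⁻¹ * Real.exp (-z ^ 2 / 2)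

/-- The standard normal CDF. -/
noncomputable def Phi (r : ℝ) : ℝ := ∫ z in Set.Iic r, gaussPdf z

/-- The inverse of the standard normal CDF. -/
noncomputable def PhiInv : ℝ → ℝ := Function.invFun Phi

/-- The open `r`-enlargement `E_r = {y : d(y,E) < r}` of a set (with `E_0 = E`). -/
noncomputable def enlarge {X : Type*} [MetricSpace X] (E : Set X) (r : ℝ) : Set X :=
  if r = 0 then E else Metric.thickening r E

/-- A Borel probability measure `ν` on a metric space satisfies the Gaussian enlargement
property with parameter `τ > 0` if for every Borel set `E` with `0 < ν(E) < 1` and every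
`r ≥ 0`, `ν(E_r) ≥ Φ(Φ⁻¹(ν(E)) + r/√(2τ))`. -/
def GaussianEnlargement {X : Type*} [MetricSpace X] [MeasurableSpace X]
    (ν : Measure X) (τ : ℝ) : Prop :=
  ∀ E : Set X, MeasurableSet E → 0 < ν E → ν E < 1 → ∀ r : ℝ, 0 ≤ r →
    ENNReal.ofReal (Phi (PhiInv (ν E).toReal + r / Real.sqrt (2 * τ))) ≤ ν (enlarge E r)

/-- The distance `d(A,B) = inf {d(a,b) : a ∈ A, b ∈ B}` between two sets. -/
noncomputable def setDist {X : Type*} [MetricSpace X] (A B : Set X) : ℝ :=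
  sInf (Set.image2 dist A B)


namespace S15
open ProbabilityTheory Filter Topology

lemma pdf_eq : gaussPdf = gaussianPDFReal 0 1 := by
  funext x
  simp [gaussPdf, gaussianPDFReal_def]

lemma pdf_pos (x : ℝ) : 0 < gaussPdf x := by
  unfold gaussPdf; positivity

lemma pdf_int : Integrable gaussPdf := by
  rw [pdf_eq]; exact integrable_gaussianPDFReal 0 1

lemma pdf_meas : Measurable gaussPdf := by
  unfold gaussPdf; fun_prop

noncomputable def gm : Measure ℝ := volume.withDensity (fun x => ENNReal.ofReal (gaussPdf x))

instance : IsProbabilityMeasure gm := by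
  constructor
  simp only [gm, withDensity_apply _ MeasurableSet.univ, pdf_eq, Measure.restrict_univ]
  exact lintegral_gaussianPDFReal_eq_one 0 one_ne_zero

lemma gm_Iic (r : ℝ) : gm (Set.Iic r) = ENNReal.ofReal (Phi r) := by
  rw [gm, withDensity_apply _ measurableSet_Iic, Phi, ofReal_integral_eq_lintegral_ofReal
    pdf_int.integrableOn (ae_of_all _ fun x => (pdf_pos x).le)]

lemma gm_Iio (r : ℝ) : gm (Set.Iio r) = ENNReal.ofReal (Phi r) := by
  rw [← gm_Iic, gm, withDensity_apply _ measurableSet_Iic, withDensity_apply _ measurableSet_Iio]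
  exact setLIntegral_congr Iio_ae_eq_Iic

lemma Phi_nonneg (r : ℝ) : 0 ≤ Phi r :=
  integral_nonneg fun x => (pdf_pos x).le

lemma Phi_sub (a b : ℝ) : Phi b - Phi a = ∫ x in a..b, gaussPdf x :=
  intervalIntegral.integral_Iic_sub_Iic pdf_int.integrableOn pdf_int.integrableOn

lemma Phi_strictMono : StrictMono Phi := by
  intro a b h
  have := intervalIntegral.intervalIntegral_pos_of_pos (pdf_int.intervalIntegrable (a := a) (b := b))
    pdf_pos h
  have := Phi_sub a b
  linarith

lemma Phi_cont : Continuous Phi := by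
  have h := intervalIntegral.continuous_primitive (f := gaussPdf) (μ := volume)
    (fun a b => pdf_int.intervalIntegrable) 0
  have : Phi = fun b => Phi 0 + ∫ x in (0:ℝ)..b, gaussPdf x := by
    funext b
    have := Phi_sub 0 b
    linarith
  rw [this]
  exact continuous_const.add h

lemma Phi_zero : Phi 0 = 1 / 2 := by
  have h1 : Phi 0 = ∫ x in Set.Ioi (0:ℝ), gaussPdf x := by
    have := integral_comp_neg_Iic 0 gaussPdf
    rw [neg_zero] at this
    rw [← this, Phi]
    simp [gaussPdf]
  have h2 := intervalIntegral.integral_Iic_add_Ioi (b := (0:ℝ)) (f := gaussPdf) (μ := volume)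
    pdf_int.integrableOn pdf_int.integrableOn
  have h3 : ∫ x, gaussPdf x = 1 := by
    rw [pdf_eq]; exact integral_gaussianPDFReal_eq_one 0 one_ne_zero
  rw [h3, ← h1] at h2
  change Phi 0 + Phi 0 = 1 at h2
  linarith

lemma Phi_eq_cdf : Phi = cdf gm := by
  funext x
  rw [cdf_eq_real, Measure.real, gm_Iic, ENNReal.toReal_ofReal (Phi_nonneg x)]

lemma PhiInv_nonneg {p : ℝ} (h : 1 / 2 ≤ p) (h1 : p < 1) : 0 ≤ PhiInv p := by
  have hr : p ∈ Set.range Phi := by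
    refine mem_range_of_exists_le_of_exists_ge Phi_cont ⟨0, by rw [Phi_zero]; exact h⟩ ?_
    have := tendsto_cdf_atTop gm
    rw [← Phi_eq_cdf] at this
    obtain ⟨b, hb⟩ := (this.eventually (lt_mem_nhds h1)).exists
    exact ⟨b, hb.le⟩
  have h2 : Phi (PhiInv p) = p := Function.invFun_eq hr
  rw [← Phi_strictMono.le_iff_le, h2, Phi_zero]
  exact h

lemma dom {X : Type*} [MetricSpace X] [MeasurableSpace X] [BorelSpace X]
    (ν : Measure X) [IsProbabilityMeasure ν] (τ : ℝ) (hτ : 0 < τ)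
    (hGEP : GaussianEnlargement ν τ)
    (H : ℝ) (hH : 0 < H) (z : X)
    (hz : ∫⁻ y, ENNReal.ofReal (dist z y ^ 2) ∂ν ≤ ENNReal.ofReal (H * τ))
    (Y : X → ℝ) (hY : ∀ y, Y y = max (dist z y - Real.sqrt (2 * H * τ)) 0) (s : ℝ) :
    ν {y | s ≤ Y y} ≤ gm {x | s ≤ Real.sqrt (2 * τ) * max x 0} := by
  have hσ : 0 < √(2 * τ) := by positivity
  have hYm : Measurable Y := by
    have : Y = fun y => max (dist z y - √(2 * H * τ)) 0 := funext hY
    rw [this]; fun_prop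
  rcases le_or_gt s 0 with hs | hs
  · have : {x | s ≤ Real.sqrt (2 * τ) * max x 0} = Set.univ := by
      ext x
      simp only [Set.mem_setOf_eq, Set.mem_univ, iff_true]
      have : 0 ≤ Real.sqrt (2 * τ) * max x 0 := by positivity
      linarith
    rw [this, measure_univ]
    exact prob_le_one
  have e1 : {x | s ≤ Real.sqrt (2 * τ) * max x 0} = (Set.Iio (s / √(2 * τ)))ᶜ := by
    ext x
    simp only [Set.mem_setOf_eq, Set.compl_Iio, Set.mem_Ici]
    rw [div_le_iff₀' hσ]
    constructor
    · intro h
      rcases le_total x 0 with hx | hx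
      · rw [max_eq_right hx] at h; linarith
      · rwa [max_eq_left hx] at h
    · intro h
      exact h.trans (mul_le_mul_of_nonneg_left (le_max_left _ _) hσ.le)
  have e2 : {y | s ≤ Y y} = {y | Y y < s}ᶜ := by
    ext y; simp
  rw [e1, e2, prob_compl_eq_one_sub measurableSet_Iio,
    prob_compl_eq_one_sub (measurableSet_lt hYm measurable_const), gm_Iio]
  apply tsub_le_tsub_left
  set E := {y : X | dist z y ≤ √(2 * H * τ)} with hE
  have hEm : MeasurableSet E := measurableSet_le (by fun_prop) measurable_const
  have hc : ν Eᶜ ≤ ENNReal.ofReal (1 / 2) := by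
    have hpos : 0 < 2 * H * τ := by positivity
    have h := meas_ge_le_lintegral_div (μ := ν) (f := fun y => ENNReal.ofReal (dist z y ^ 2))
      (by fun_prop) (ε := ENNReal.ofReal (2 * H * τ)) (by simpa using hpos) ENNReal.ofReal_ne_top
    calc ν Eᶜ ≤ _ := measure_mono ?_
      _ ≤ _ := h
      _ ≤ ENNReal.ofReal (H * τ) / ENNReal.ofReal (2 * H * τ) := by gcongr
      _ = ENNReal.ofReal (1 / 2) := by
        rw [← ENNReal.ofReal_div_of_pos hpos]
        congr 1
        field_simp
    intro y hy
    simp only [hE, Set.mem_compl_iff, Set.mem_setOf_eq, not_le] at hy ⊢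
    apply ENNReal.ofReal_le_ofReal
    exact (Real.sqrt_lt' (by linarith [Real.sqrt_nonneg (2 * H * τ)])).1 hy |>.le
  have hsub : E ⊆ {y | Y y < s} := by
    intro y hy
    simp only [hE, Set.mem_setOf_eq] at hy ⊢
    rw [hY]
    exact max_lt (by linarith) hs
  have hE2 : 1 / 2 ≤ (ν E).toReal := by
    have h1 : ν.real E + ν.real Eᶜ = 1 := by
      rw [measureReal_add_measureReal_compl hEm]; simp
    have h2 : ν.real Eᶜ ≤ 1 / 2 := ENNReal.toReal_le_of_le_ofReal (by norm_num) hc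
    change 1 / 2 ≤ ν.real E
    linarith
  rcases (prob_le_one (μ := ν) (s := E)).lt_or_eq with h1 | h1
  · have h0 : 0 < ν E := by
      by_contra h
      have : ν E = 0 := by simpa using h
      rw [this] at hE2; norm_num at hE2
    have h := hGEP E hEm h0 h1 s hs.le
    have hp : 0 ≤ PhiInv (ν E).toReal := by
      apply PhiInv_nonneg hE2
      have := (ENNReal.toReal_lt_toReal h1.ne_top ENNReal.one_ne_top).2 h1
      simpa using this
    calc ENNReal.ofReal (Phi (s / √(2 * τ))) ≤ _ := 
          ENNReal.ofReal_le_ofReal (Phi_strictMono.monotone (by linarith))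
      _ ≤ _ := h
      _ ≤ _ := measure_mono ?_
    rw [enlarge, if_neg hs.ne']
    intro y hy
    rw [Metric.mem_thickening_iff] at hy
    obtain ⟨w, hw, hyw⟩ := hy
    simp only [hE, Set.mem_setOf_eq] at hw ⊢
    rw [hY]
    have := dist_triangle z w y
    rw [dist_comm w y] at this
    exact max_lt (by linarith) hs
  · calc _ ≤ (1 : ENNReal) := by rw [← gm_Iio]; exact prob_le_one
      _ = ν E := h1.symm
      _ ≤ _ := measure_mono hsub

lemma lint_dom {X : Type*} [MeasurableSpace X] (ν : Measure X) [IsProbabilityMeasure ν]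
    (Y : X → ℝ) (Z : ℝ → ℝ) (hY : Measurable Y) (hZ : Measurable Z)
    (h : ∀ s, ν {y | s ≤ Y y} ≤ gm {x | s ≤ Z x}) (f : ℝ → ℝ) (hf : Monotone f)
    (hc : Continuous f) (h0 : ∀ x, 0 ≤ f x) :
    ∫⁻ y, ENNReal.ofReal (f (Y y)) ∂ν ≤ ∫⁻ x, ENNReal.ofReal (f (Z x)) ∂gm := by
  rw [lintegral_eq_lintegral_meas_le ν (ae_of_all _ fun y => h0 _)
      (hc.measurable.comp hY).aemeasurable,
    lintegral_eq_lintegral_meas_le gm (ae_of_all _ fun y => h0 _)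
      (hc.measurable.comp hZ).aemeasurable]
  apply lintegral_mono
  intro t
  change ν {a | t ≤ f (Y a)} ≤ gm {a | t ≤ f (Z a)}
  by_cases hne : ({x | t ≤ f x}).Nonempty
  · by_cases hb : BddBelow {x | t ≤ f x}
    · have hcl : IsClosed {x | t ≤ f x} := isClosed_le continuous_const hc
      have hm := hcl.csInf_mem hne hb
      have key : ∀ x, t ≤ f x ↔ sInf {x | t ≤ f x} ≤ x := fun x =>
        ⟨fun hx => csInf_le hb hx, fun hx => le_trans hm (hf hx)⟩
      have := h (sInf {x | t ≤ f x})
      generalize sInf {x | t ≤ f x} = c at key this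
      simp only [key]
      exact this
    · have : {a | t ≤ f (Z a)} = Set.univ := by
        ext a
        simp only [Set.mem_setOf_eq, Set.mem_univ, iff_true]
        rw [not_bddBelow_iff] at hb
        obtain ⟨w, hw, hwa⟩ := hb (Z a)
        exact le_trans hw (hf hwa.le)
      rw [this, measure_univ]
      exact prob_le_one
  · have : {a | t ≤ f (Y a)} = ∅ := by
      ext a
      simp only [Set.mem_setOf_eq, Set.mem_empty_iff_false, iff_false]
      intro ha
      exact hne ⟨_, ha⟩
    rw [this]; simp

lemma gm_split (f : ℝ → ℝ) (σ : ℝ) (hf : Continuous f) (h0 : ∀ x, 0 ≤ f x) (hf0 : f 0 = 1)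
    (hi : IntegrableOn (fun x => f (σ * x) * gaussPdf x) (Set.Ioi 0)) :
    ∫⁻ x, ENNReal.ofReal (f (σ * max x 0)) ∂gm =
      ENNReal.ofReal (1 / 2 + ∫ x in Set.Ioi (0:ℝ), f (σ * x) * gaussPdf x) := by
  rw [← lintegral_add_compl _ (measurableSet_Iic (a := (0:ℝ))),
    ENNReal.ofReal_add (by norm_num)
      (integral_nonneg fun x => mul_nonneg (h0 _) (pdf_pos x).le)]
  congr 1
  · rw [setLIntegral_congr_fun (g := fun _ => 1) measurableSet_Iic
      (fun x hx => by simp [max_eq_right (Set.mem_Iic.1 hx), hf0]), setLIntegral_one, gm_Iic, Phi_zero]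
  · rw [Set.compl_Iic, setLIntegral_congr_fun (g := fun x => ENNReal.ofReal (f (σ * x)))
      measurableSet_Ioi (fun x hx => by simp only [max_eq_left (le_of_lt (Set.mem_Ioi.1 hx))]),
      ofReal_integral_eq_lintegral_ofReal hi
        (ae_of_all _ fun x => mul_nonneg (h0 _) (pdf_pos x).le), gm,
      restrict_withDensity measurableSet_Ioi, lintegral_withDensity_eq_lintegral_mul _
        pdf_meas.ennreal_ofReal
        (by exact (hf.measurable.comp (measurable_const_mul σ)).ennreal_ofReal)]
    apply lintegral_congr
    intro x
    simp only [Pi.mul_apply]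
    rw [mul_comm, ENNReal.ofReal_mul (h0 _)]

lemma exp_pdf (a x : ℝ) : Real.exp (a * x) * gaussPdf x = Real.exp (a ^ 2 / 2) * gaussPdf (-x + a) := by
  unfold gaussPdf
  rw [mul_left_comm, ← Real.exp_add, mul_left_comm, ← Real.exp_add]
  congr 2
  ring

lemma int_shift (a : ℝ) : ∫ x in Set.Iic (0:ℝ), gaussPdf (x + a) = Phi a := by
  have h := (measurePreserving_add_right (volume : Measure ℝ) a).setIntegral_preimage_emb
    (measurableEmbedding_addRight a) gaussPdf (Set.Iic a)
  rw [Phi, ← h]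
  simp

lemma sq_pdf (β x : ℝ) : Real.exp (2 * β * x ^ 2) * gaussPdf x =
    (√(2 * π))⁻¹ * Real.exp (-((1 - 4 * β) / 2) * x ^ 2) := by
  unfold gaussPdf
  rw [mul_left_comm, ← Real.exp_add]
  congr 2
  ring

end S15

open S15

/-- Exponential moments of the excess distance from an `H`-center: if `ν` satisfies the
Gaussian enlargement property with parameter `τ`, `∫ d(z,y)² dν ≤ Hτ`, and
`Y(y) = (d(z,y) - √(2Hτ))₊`, then `∫ e^{λY} dν ≤ 1/2 + e^{τλ²} Φ(λ√(2τ))` for every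
`λ ≥ 0`, and `∫ exp(βY²/τ) dν ≤ 1/2 + (1/2)(1-4β)^{-1/2}` for every `0 ≤ β < 1/4`. -/
theorem stmt15 {X : Type*} [MetricSpace X] [MeasurableSpace X] [BorelSpace X]
    (ν : Measure X) [IsProbabilityMeasure ν] (τ : ℝ) (hτ : 0 < τ)
    (hGEP : GaussianEnlargement ν τ)
    (H : ℝ) (hH : 0 < H) (z : X)
    (hz : ∫⁻ y, ENNReal.ofReal (dist z y ^ 2) ∂ν ≤ ENNReal.ofReal (H * τ))
    (Y : X → ℝ) (hY : ∀ y, Y y = max (dist z y - Real.sqrt (2 * H * τ)) 0) :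
    (∀ lam ≥ (0 : ℝ),
      ∫⁻ y, ENNReal.ofReal (Real.exp (lam * Y y)) ∂ν ≤
        ENNReal.ofReal (1 / 2 +
          Real.exp (τ * lam ^ 2) * Phi (lam * Real.sqrt (2 * τ)))) ∧
    (∀ β : ℝ, 0 ≤ β → β < 1 / 4 →
      ∫⁻ y, ENNReal.ofReal (Real.exp (β * (Y y) ^ 2 / τ)) ∂ν ≤
        ENNReal.ofReal (1 / 2 + (1 / 2) * (Real.sqrt (1 - 4 * β))⁻¹)) := by
  have hYm : Measurable Y := by
    have : Y = fun y => max (dist z y - √(2 * H * τ)) 0 := funext hY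
    rw [this]; fun_prop
  have hY0 : ∀ y, 0 ≤ Y y := fun y => by rw [hY]; exact le_max_right _ _
  have hd := dom ν τ hτ hGEP H hH z hz Y hY
  have hσ2 : √(2 * τ) ^ 2 = 2 * τ := Real.sq_sqrt (by positivity)
  constructor
  · intro lam hl
    have h1 := lint_dom ν Y _ hYm (by fun_prop) hd (fun x => Real.exp (lam * x))
      (fun a b hab => Real.exp_le_exp.2 (mul_le_mul_of_nonneg_left hab hl)) (by fun_prop)
      (fun x => (Real.exp_pos _).le)
    have e : (fun x => Real.exp (lam * (√(2 * τ) * x)) * gaussPdf x) =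
        fun x => Real.exp (τ * lam ^ 2) * gaussPdf (-x + lam * √(2 * τ)) := by
      funext x
      rw [← mul_assoc, exp_pdf, mul_pow, hσ2]
      congr 2
      ring
    refine h1.trans (le_of_eq ?_)
    rw [gm_split (fun x => Real.exp (lam * x)) (√(2 * τ)) (by fun_prop)
      (fun x => (Real.exp_pos _).le) (by simp) ?_]
    · congr 2
      rw [e, integral_const_mul,
        integral_comp_neg_Ioi 0 (fun x => gaussPdf (x + lam * √(2 * τ))), neg_zero, int_shift]
    · rw [e]
      exact (((pdf_int.comp_add_right (lam * √(2 * τ))).comp_neg).const_mul _).integrableOn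
  · intro β hβ0 hβ
    have h1 := lint_dom ν Y _ hYm (by fun_prop) hd (fun x => Real.exp (β * (max x 0) ^ 2 / τ))
      (fun a b hab => by dsimp only; gcongr) (by fun_prop)
      (fun x => (Real.exp_pos _).le)
    have h1' : ∫⁻ y, ENNReal.ofReal (Real.exp (β * (Y y) ^ 2 / τ)) ∂ν =
        ∫⁻ y, ENNReal.ofReal (Real.exp (β * (max (Y y) 0) ^ 2 / τ)) ∂ν := by
      apply lintegral_congr
      intro y
      rw [max_eq_left (hY0 y)]
    have e : Set.EqOn (fun x => Real.exp (β * (max (√(2 * τ) * x) 0) ^ 2 / τ) * gaussPdf x)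
        (fun x => (√(2 * π))⁻¹ * Real.exp (-((1 - 4 * β) / 2) * x ^ 2)) (Set.Ioi 0) := by
      intro x hx
      have hx' : 0 ≤ √(2 * τ) * x := mul_nonneg (Real.sqrt_nonneg _) (le_of_lt hx)
      dsimp only
      rw [← sq_pdf, max_eq_left hx', mul_pow, hσ2]
      congr 2
      field_simp
    rw [h1']
    refine h1.trans (le_of_eq ?_)
    rw [gm_split (fun x => Real.exp (β * (max x 0) ^ 2 / τ)) (√(2 * τ)) (by fun_prop)
      (fun x => (Real.exp_pos _).le) (by simp) ?_]
    · congr 2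
      rw [setIntegral_congr_fun measurableSet_Ioi e, integral_const_mul, integral_gaussian_Ioi]
      have hb : 0 < 1 - 4 * β := by linarith
      have : π / ((1 - 4 * β) / 2) = (2 * π) / (1 - 4 * β) := by field_simp
      rw [this, Real.sqrt_div (by positivity)]
      have : √(2 * π) ≠ 0 := by positivity
      field_simp
    · rw [integrableOn_congr_fun e measurableSet_Ioi]
      exact ((integrable_exp_neg_mul_sq (by linarith)).const_mul _).integrableOn
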